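/- arXiv:2505.20621 — 2 statements merged into one kernel-verified Lean document; each statement's English description precedes it below -/
import Mathlib

section
/- Let a < 0 < b be real numbers, ε ≥ 0, δ ≥ 0, and let μ and ν be Borel probability measures on ℝ, both supported on the interval [a, b]. Suppose both μ(S) ≤ e^ε · ν(S) + δ and ν(S) ≤ e^ε · μ(S) + δ hold for every Borel set S ⊆ ℝ. Write E_ν⁺ = ∫ max(x, 0) dν(x) and E_ν⁻ = ∫ max(−x, 0) dν(x). Then ∫ x dμ(x) ≥ e^{−ε} · (E_ν⁺ − b·δ) − (e^ε · E_ν⁻ − a·δ). (Real-valued expected outcomes guarantee, ADP lower bound.) -/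
open MeasureTheory

/-!
For a nonnegative random variable bounded by `M`, the layer cake formula writes the expectation as
the integral of the tail probability over `(0, M]`. Integrating a bound on tail probabilities with
additive error `δ` therefore costs at most `M * δ`. Applied to the positive part, with the two
measures exchanged, and to the negative part, this bounds both terms of
`E_μ X = E_μ X⁺ - E_μ X⁻`.
-/

section TailComparison

variable {α β : Type*} [MeasurableSpace α] [MeasurableSpace β] {μ : Measure α} {ν : Measure β}
  {f : α → ℝ} {g : β → ℝ}

theorem integrableOn_Ioi_measureReal_le (hf : Integrable f μ) (hf₀ : 0 ≤ᵐ[μ] f) :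
    IntegrableOn (fun t ↦ μ.real {x | t ≤ f x}) (Set.Ioi 0) := by
  have hanti : Antitone fun t ↦ μ {x | t ≤ f x} :=
    fun _ _ hst ↦ measure_mono fun _ hx ↦ hst.trans hx
  refine integrable_toReal_of_lintegral_ne_top hanti.measurable.aemeasurable ?_
  rw [← lintegral_eq_lintegral_meas_le μ hf₀ hf.aemeasurable]
  exact hf.lintegral_lt_top.ne

theorem setIntegral_Ioc_measureReal_le_integral (hf : Integrable f μ) (hf₀ : 0 ≤ᵐ[μ] f) (M : ℝ) :
    ∫ t in Set.Ioc 0 M, μ.real {x | t ≤ f x} ≤ ∫ x, f x ∂μ := by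
  rw [hf.integral_eq_integral_meas_le hf₀]
  exact setIntegral_mono_set (integrableOn_Ioi_measureReal_le hf hf₀)
    (.of_forall fun _ ↦ measureReal_nonneg) Set.Ioc_subset_Ioi_self.eventuallyLE

theorem integral_le_of_measureReal_le_add {c δ M : ℝ}
    (hf : Integrable f μ) (hf₀ : 0 ≤ᵐ[μ] f) (hfM : ∀ᵐ x ∂μ, f x ≤ M)
    (hg : Integrable g ν) (hg₀ : 0 ≤ᵐ[ν] g) (hc : 0 ≤ c) (hM : 0 ≤ M)
    (htail : ∀ t ∈ Set.Ioc 0 M, μ.real {x | t ≤ f x} ≤ c * ν.real {y | t ≤ g y} + δ) :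
    ∫ x, f x ∂μ ≤ c * ∫ y, g y ∂ν + M * δ := by
  have hf_tail : IntegrableOn (fun t ↦ μ.real {x | t ≤ f x}) (Set.Ioc 0 M) :=
    (integrableOn_Ioi_measureReal_le hf hf₀).mono_set Set.Ioc_subset_Ioi_self
  have hg_tail : IntegrableOn (fun t ↦ c * ν.real {y | t ≤ g y}) (Set.Ioc 0 M) :=
    ((integrableOn_Ioi_measureReal_le hg hg₀).mono_set Set.Ioc_subset_Ioi_self).const_mul c
  have hδ : IntegrableOn (fun _ ↦ δ) (Set.Ioc 0 M) := integrable_const δ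
  calc ∫ x, f x ∂μ
      = ∫ t in Set.Ioc 0 M, μ.real {x | t ≤ f x} := hf.integral_eq_integral_Ioc_meas_le hf₀ hfM
    _ ≤ ∫ t in Set.Ioc 0 M, (c * ν.real {y | t ≤ g y} + δ) :=
        setIntegral_mono_on hf_tail (hg_tail.add hδ) measurableSet_Ioc htail
    _ = c * (∫ t in Set.Ioc 0 M, ν.real {y | t ≤ g y}) + M * δ := by
        rw [integral_add hg_tail hδ, integral_const_mul, setIntegral_const,
          Real.volume_real_Ioc_of_le hM, sub_zero, smul_eq_mul]
    _ ≤ c * ∫ y, g y ∂ν + M * δ := by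
        gcongr
        exact setIntegral_Ioc_measureReal_le_integral hg hg₀ M

theorem integral_max_zero_le_of_measureReal_le_add {c δ M : ℝ}
    (hf : Integrable f μ) (hfM : ∀ᵐ x ∂μ, f x ≤ M) (hg : Integrable g ν) (hc : 0 ≤ c) (hM : 0 ≤ M)
    (htail : ∀ t ∈ Set.Ioc 0 M, μ.real {x | t ≤ f x} ≤ c * ν.real {y | t ≤ g y} + δ) :
    ∫ x, max (f x) 0 ∂μ ≤ c * ∫ y, max (g y) 0 ∂ν + M * δ :=
  integral_le_of_measureReal_le_add hf.pos_part (.of_forall fun _ ↦ le_max_right _ _)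
    (hfM.mono fun _ hx ↦ max_le hx hM) hg.pos_part (.of_forall fun _ ↦ le_max_right _ _) hc hM
    fun t ht ↦ by simpa only [le_max_iff, ht.1.not_ge, or_false] using htail t ht

end TailComparison

theorem integral_eq_integral_max_zero_sub {α : Type*} [MeasurableSpace α] {μ : Measure α}
    {f : α → ℝ} (hf : Integrable f μ) :
    ∫ x, f x ∂μ = ∫ x, max (f x) 0 ∂μ - ∫ x, max (-f x) 0 ∂μ := by
  simpa only [Real.coe_toNNReal'] using integral_eq_integral_pos_part_sub_integral_neg_part hf

theorem adp_real_valued_expected_outcomes_lower_general {Ω : Type*} [MeasurableSpace Ω]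
    {μ ν : Measure Ω} {X : Ω → ℝ} {a b ε δ : ℝ} (ha : a ≤ 0) (hb : 0 ≤ b)
    (hμ : Integrable X μ) (hν : Integrable X ν)
    (hμa : ∀ᵐ ω ∂μ, a ≤ X ω) (hνb : ∀ᵐ ω ∂ν, X ω ≤ b)
    (hlower : ∀ t ∈ Set.Ico a 0,
      μ.real {ω | X ω ≤ t} ≤ Real.exp ε * ν.real {ω | X ω ≤ t} + δ)
    (hupper : ∀ t ∈ Set.Ioc 0 b,
      ν.real {ω | t ≤ X ω} ≤ Real.exp ε * μ.real {ω | t ≤ X ω} + δ) :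
    ∫ ω, X ω ∂μ ≥
      Real.exp (-ε) * ((∫ ω, max (X ω) 0 ∂ν) - b * δ)
        - (Real.exp ε * (∫ ω, max (-X ω) 0 ∂ν) - a * δ) := by
  have hpos : Real.exp (-ε) * ((∫ ω, max (X ω) 0 ∂ν) - b * δ) ≤ ∫ ω, max (X ω) 0 ∂μ := by
    rw [Real.exp_neg, inv_mul_le_iff₀ (Real.exp_pos ε), sub_le_iff_le_add]
    exact integral_max_zero_le_of_measureReal_le_add hν hνb hμ (Real.exp_nonneg ε) hb hupper
  have hneg : ∫ ω, max (-X ω) 0 ∂μ ≤ Real.exp ε * (∫ ω, max (-X ω) 0 ∂ν) + -a * δ := by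
    refine integral_max_zero_le_of_measureReal_le_add hμ.neg (hμa.mono fun _ ↦ neg_le_neg) hν.neg
      (Real.exp_nonneg ε) (neg_nonneg.2 ha) fun t ht ↦ ?_
    simpa only [Pi.neg_apply, le_neg] using hlower (-t) ⟨le_neg.1 ht.2, neg_neg_of_pos ht.1⟩
  rw [integral_eq_integral_max_zero_sub hμ]
  linarith

theorem adp_real_valued_expected_outcomes_lower
    (a b ε δ : ℝ) (ha : a < 0) (hb : 0 < b) (hε : 0 ≤ ε) (hδ : 0 ≤ δ)
    (μ ν : Measure ℝ) [IsProbabilityMeasure μ] [IsProbabilityMeasure ν]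
    (hμsupp : μ (Set.Icc a b) = 1) (hνsupp : ν (Set.Icc a b) = 1)
    (h₁ : ∀ S : Set ℝ, MeasurableSet S →
      (μ S).toReal ≤ Real.exp ε * (ν S).toReal + δ)
    (h₂ : ∀ S : Set ℝ, MeasurableSet S →
      (ν S).toReal ≤ Real.exp ε * (μ S).toReal + δ) :
    ∫ x, x ∂μ ≥
      Real.exp (-ε) * ((∫ x, max x 0 ∂ν) - b * δ)
        - (Real.exp ε * (∫ x, max (-x) 0 ∂ν) - a * δ) := by
  have hμ : ∀ᵐ x ∂μ, x ∈ Set.Icc a b := (mem_ae_iff_prob_eq_one measurableSet_Icc).2 hμsupp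
  have hν : ∀ᵐ x ∂ν, x ∈ Set.Icc a b := (mem_ae_iff_prob_eq_one measurableSet_Icc).2 hνsupp
  exact adp_real_valued_expected_outcomes_lower_general ha.le hb.le
    (.of_mem_Icc a b aemeasurable_id hμ) (.of_mem_Icc a b aemeasurable_id hν)
    (hμ.mono fun _ hx ↦ hx.1) (hν.mono fun _ hx ↦ hx.2)
    (fun _ _ ↦ h₁ _ measurableSet_Iic) (fun _ _ ↦ h₂ _ measurableSet_Ici)
end

section
/- Let a < 0 < b be real numbers, ε ≥ 0, α > 1, and let μ and ν be Borel probability measures on ℝ, both supported on the interval [a, b]. Suppose both μ(S) ≤ (e^ε · ν(S))^{(α−1)/α} and ν(S) ≤ (e^ε · μ(S))^{(α−1)/α} hold for every Borel set S ⊆ ℝ. Write E_ν⁺ = ∫ max(x, 0) dν(x) and E_ν⁻ = ∫ max(−x, 0) dν(x). Then ∫ x dμ(x) ≤ b^{1/α} · (e^ε · E_ν⁺)^{(α−1)/α} − e^{−ε} · ((−a)^{−1/α} · E_ν⁻)^{α/(α−1)}. (Real-valued expected outcomes guarantee, RDP upper bound.) -/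
open MeasureTheory

/-!
The layer cake formula writes the mean of a function `0 ≤ f ≤ M` as the integral over `(0, M]` of
its tail probabilities. The outcomes guarantee bounds each tail under `μ` by the power `(α - 1) / α`
of the tail under `ν`, and Jensen's inequality for this concave power moves it outside the integral,
at the price of the factor `M ^ (1 / α)`. Applied to the positive part of a random variable this
bounds its mean under `μ` from above; applied with `μ` and `ν` exchanged to the negative part, and
solved for the mean under `μ`, it bounds that mean from below.
-/

section Integral

variable {Ω : Type*} {mΩ : MeasurableSpace Ω} {μ ν : Measure Ω} {f : Ω → ℝ} {c p M : ℝ}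

lemma integral_rpow_le_measureReal_univ_rpow_mul_rpow_integral [IsFiniteMeasure μ]
    (hp₀ : 0 ≤ p) (hp₁ : p ≤ 1) (hf₀ : 0 ≤ᵐ[μ] f) (hf : Integrable f μ) :
    ∫ x, f x ^ p ∂μ ≤ μ.real Set.univ ^ (1 - p) * (∫ x, f x ∂μ) ^ p := by
  have hint : 0 ≤ ∫ x, f x ∂μ := integral_nonneg_of_ae hf₀
  by_cases hfp : Integrable (fun x ↦ f x ^ p) μ
  swap
  · rw [integral_undef hfp]
    positivity
  rcases eq_zero_or_neZero μ with rfl | hμ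
  · rw [integral_zero_measure]
    positivity
  have hmass : 0 < μ.real Set.univ := measureReal_univ_pos
  have jensen : (μ.real Set.univ)⁻¹ * ∫ x, f x ^ p ∂μ ≤
      ((μ.real Set.univ)⁻¹ * ∫ x, f x ∂μ) ^ p := by
    simpa only [average_eq, smul_eq_mul, Function.comp_def] using
      (Real.concaveOn_rpow hp₀ hp₁).le_map_average
        (Real.continuous_rpow_const hp₀).continuousOn isClosed_Ici hf₀ hf hfp
  calc ∫ x, f x ^ p ∂μ
      ≤ μ.real Set.univ * ((μ.real Set.univ)⁻¹ * ∫ x, f x ∂μ) ^ p :=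
        (inv_mul_le_iff₀ hmass).1 jensen
    _ = μ.real Set.univ ^ (1 - p) * (∫ x, f x ∂μ) ^ p := by
        rw [Real.mul_rpow (inv_nonneg.2 hmass.le) hint, Real.inv_rpow hmass.le,
          Real.rpow_sub hmass, Real.rpow_one, div_eq_mul_inv, mul_assoc]

lemma antitone_measureReal_superlevel {β : Type*} [Preorder β] {g : Ω → β} [IsFiniteMeasure μ] :
    Antitone fun t ↦ μ.real {x | t ≤ g x} :=
  fun _ _ hst ↦ measureReal_mono fun _ ↦ hst.trans

lemma integral_eq_setIntegral_Ioc_measureReal_superlevel [IsFiniteMeasure μ]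
    (hf : AEMeasurable f μ) (hfM : ∀ᵐ x ∂μ, f x ∈ Set.Icc 0 M) :
    ∫ x, f x ∂μ = ∫ t in Set.Ioc 0 M, μ.real {x | t ≤ f x} :=
  (Integrable.of_mem_Icc 0 M hf hfM).integral_eq_integral_Ioc_meas_le
    (hfM.mono fun _ hx ↦ hx.1) (hfM.mono fun _ hx ↦ hx.2)

lemma integral_le_rpow_mul_rpow_integral_of_superlevel [IsFiniteMeasure μ] [IsFiniteMeasure ν]
    (hM : 0 ≤ M) (hc : 0 ≤ c) (hp₀ : 0 ≤ p) (hp₁ : p ≤ 1)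
    (hfμ : AEMeasurable f μ) (hfν : AEMeasurable f ν)
    (hμM : ∀ᵐ x ∂μ, f x ∈ Set.Icc 0 M) (hνM : ∀ᵐ x ∂ν, f x ∈ Set.Icc 0 M)
    (h : ∀ t ∈ Set.Ioc 0 M, μ.real {x | t ≤ f x} ≤ (c * ν.real {x | t ≤ f x}) ^ p) :
    ∫ x, f x ∂μ ≤ M ^ (1 - p) * (c * ∫ x, f x ∂ν) ^ p := by
  have tail_nonneg (t : ℝ) : 0 ≤ c * ν.real {x | t ≤ f x} := by positivity
  have tail_anti : Antitone fun t : ℝ ↦ c * ν.real {x | t ≤ f x} :=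
    antitone_measureReal_superlevel.const_mul hc
  have tail_rpow_anti : Antitone fun t : ℝ ↦ (c * ν.real {x | t ≤ f x}) ^ p :=
    fun s t hst ↦ Real.rpow_le_rpow (tail_nonneg t) (tail_anti hst) hp₀
  calc ∫ x, f x ∂μ
      = ∫ t in Set.Ioc 0 M, μ.real {x | t ≤ f x} :=
        integral_eq_setIntegral_Ioc_measureReal_superlevel hfμ hμM
    _ ≤ ∫ t in Set.Ioc 0 M, (c * ν.real {x | t ≤ f x}) ^ p :=
        setIntegral_mono_on antitone_measureReal_superlevel.intervalIntegrable.1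
          tail_rpow_anti.intervalIntegrable.1 measurableSet_Ioc h
    _ ≤ (volume.restrict (Set.Ioc 0 M)).real Set.univ ^ (1 - p) *
          (∫ t in Set.Ioc 0 M, c * ν.real {x | t ≤ f x}) ^ p :=
        integral_rpow_le_measureReal_univ_rpow_mul_rpow_integral hp₀ hp₁
          (.of_forall tail_nonneg) tail_anti.intervalIntegrable.1
    _ = M ^ (1 - p) * (c * ∫ x, f x ∂ν) ^ p := by
        rw [measureReal_restrict_apply_univ, Real.volume_real_Ioc_of_le hM, sub_zero,
          integral_const_mul, ← integral_eq_setIntegral_Ioc_measureReal_superlevel hfν hνM]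

lemma integral_eq_integral_max_sub_integral_max_neg (hf : Integrable f μ) :
    ∫ x, f x ∂μ = ∫ x, max (f x) 0 ∂μ - ∫ x, max (-f x) 0 ∂μ := by
  simpa only [Real.coe_toNNReal'] using integral_eq_integral_pos_part_sub_integral_neg_part hf

end Integral

/-- One direction of the `(ε, α)`-RDP outcomes guarantee; the two-sided guarantee is this property
for both `(μ, ν)` and `(ν, μ)`. -/
def RDPOutcomesGuarantee {Ω : Type*} [MeasurableSpace Ω] (ε α : ℝ) (μ ν : Measure Ω) : Prop :=
  ∀ S : Set Ω, MeasurableSet S → μ.real S ≤ (Real.exp ε * ν.real S) ^ ((α - 1) / α)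

namespace RDPOutcomesGuarantee

variable {Ω : Type*} [MeasurableSpace Ω] {μ ν : Measure Ω} [IsFiniteMeasure μ] [IsFiniteMeasure ν]
  {f : Ω → ℝ} {ε α M : ℝ}

lemma integral_le (h : RDPOutcomesGuarantee ε α μ ν) (hα : 1 ≤ α) (hM : 0 ≤ M)
    (hf : Measurable f) (hμM : ∀ᵐ x ∂μ, f x ∈ Set.Icc 0 M) (hνM : ∀ᵐ x ∂ν, f x ∈ Set.Icc 0 M) :
    ∫ x, f x ∂μ ≤ M ^ (1 / α) * (Real.exp ε * ∫ x, f x ∂ν) ^ ((α - 1) / α) := by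
  have hα₀ : 0 < α := one_pos.trans_le hα
  have hconj : 1 - (α - 1) / α = 1 / α := by
    field_simp
    ring
  have hle := integral_le_rpow_mul_rpow_integral_of_superlevel hM (Real.exp_nonneg ε)
    (div_nonneg (sub_nonneg.2 hα) hα₀.le) ((div_le_one hα₀).2 (sub_le_self α zero_le_one))
    hf.aemeasurable hf.aemeasurable hμM hνM fun t _ ↦ h _ (measurableSet_le measurable_const hf)
  rwa [hconj] at hle

lemma le_integral (h : RDPOutcomesGuarantee ε α ν μ) (hα : 1 < α) (hM : 0 < M)
    (hf : Measurable f) (hμM : ∀ᵐ x ∂μ, f x ∈ Set.Icc 0 M) (hνM : ∀ᵐ x ∂ν, f x ∈ Set.Icc 0 M) :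
    Real.exp (-ε) * (M ^ (-1 / α) * ∫ x, f x ∂ν) ^ (α / (α - 1)) ≤ ∫ x, f x ∂μ := by
  have hq : 0 < α / (α - 1) := div_pos (one_pos.trans hα) (sub_pos.2 hα)
  have hμ₀ : 0 ≤ ∫ x, f x ∂μ := integral_nonneg_of_ae (hμM.mono fun _ hx ↦ hx.1)
  have hν₀ : 0 ≤ ∫ x, f x ∂ν := integral_nonneg_of_ae (hνM.mono fun _ hx ↦ hx.1)
  have hroot : M ^ (-1 / α) * ∫ x, f x ∂ν ≤ (Real.exp ε * ∫ x, f x ∂μ) ^ (α / (α - 1))⁻¹ := by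
    rw [neg_div, Real.rpow_neg hM.le, inv_mul_le_iff₀ (by positivity), inv_div]
    exact h.integral_le hα.le hM.le hf hνM hμM
  rw [Real.exp_neg, inv_mul_le_iff₀ (Real.exp_pos ε)]
  exact (Real.le_rpow_inv_iff_of_pos (by positivity) (by positivity) hq).1 hroot

end RDPOutcomesGuarantee

theorem rdp_real_valued_expected_outcomes_upper_general {Ω : Type*} [MeasurableSpace Ω]
    {a b ε α : ℝ} (ha : a < 0) (hb : 0 ≤ b) (hα : 1 < α)
    {μ ν : Measure Ω} [IsFiniteMeasure μ] [IsFiniteMeasure ν]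
    (hμν : RDPOutcomesGuarantee ε α μ ν) (hνμ : RDPOutcomesGuarantee ε α ν μ)
    {X : Ω → ℝ} (hX : Measurable X)
    (hμX : ∀ᵐ ω ∂μ, X ω ∈ Set.Icc a b) (hνX : ∀ᵐ ω ∂ν, X ω ∈ Set.Icc a b) :
    ∫ ω, X ω ∂μ ≤
      b ^ (1 / α) * (Real.exp ε * ∫ ω, max (X ω) 0 ∂ν) ^ ((α - 1) / α)
        - Real.exp (-ε) * ((-a) ^ (-1 / α) * ∫ ω, max (-X ω) 0 ∂ν) ^ (α / (α - 1)) := by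
  have pos_mem {x : ℝ} (hx : x ∈ Set.Icc a b) : max x 0 ∈ Set.Icc 0 b :=
    ⟨le_max_right _ _, max_le hx.2 hb⟩
  have neg_mem {x : ℝ} (hx : x ∈ Set.Icc a b) : max (-x) 0 ∈ Set.Icc 0 (-a) :=
    ⟨le_max_right _ _, max_le (neg_le_neg hx.1) (neg_nonneg.2 ha.le)⟩
  rw [integral_eq_integral_max_sub_integral_max_neg (.of_mem_Icc a b hX.aemeasurable hμX)]
  exact sub_le_sub
    (hμν.integral_le hα.le hb (hX.max measurable_const)
      (hμX.mono fun _ ↦ pos_mem) (hνX.mono fun _ ↦ pos_mem))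
    (hνμ.le_integral hα (neg_pos.2 ha) (hX.neg.max measurable_const)
      (hμX.mono fun _ ↦ neg_mem) (hνX.mono fun _ ↦ neg_mem))

theorem rdp_real_valued_expected_outcomes_upper
    (a b ε α : ℝ) (ha : a < 0) (hb : 0 < b) (hε : 0 ≤ ε) (hα : 1 < α)
    (μ ν : Measure ℝ) [IsProbabilityMeasure μ] [IsProbabilityMeasure ν]
    (hμsupp : μ (Set.Icc a b) = 1) (hνsupp : ν (Set.Icc a b) = 1)
    (h₁ : ∀ S : Set ℝ, MeasurableSet S →
      (μ S).toReal ≤ (Real.exp ε * (ν S).toReal) ^ ((α - 1) / α))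
    (h₂ : ∀ S : Set ℝ, MeasurableSet S →
      (ν S).toReal ≤ (Real.exp ε * (μ S).toReal) ^ ((α - 1) / α)) :
    ∫ x, x ∂μ ≤
      b ^ (1 / α) * (Real.exp ε * ∫ x, max x 0 ∂ν) ^ ((α - 1) / α)
        - Real.exp (-ε) * ((-a) ^ (-1 / α) * ∫ x, max (-x) 0 ∂ν) ^ (α / (α - 1)) :=
  rdp_real_valued_expected_outcomes_upper_general ha hb.le hα h₁ h₂ measurable_id
    ((mem_ae_iff_prob_eq_one measurableSet_Icc).2 hμsupp)
    ((mem_ae_iff_prob_eq_one measurableSet_Icc).2 hνsupp)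
end
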